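/- Let F : E → B be a Kumjian-Pask fibration and μ a morphism of E. Then the maps res_μ : Z(μ) → Z(s(μ)) and ind_μ : Z(s(μ)) → Z(μ) are continuous with respect to the subspace topologies inherited from F^∞. -/

import Mathlib

/-!
Both continuity claims come down to one principle: in a discrete Conduché fibration, a lifted
morphism determines its lifted factors.

* For `res_μ`: the preimage of `Z(β)` is `Z(β ≫ μ)` inside `Z(μ)`.
  Indeed `x (F β ≫ F μ) = res_μ x (F β) ≫ μ`, so if `x` passes through `β ≫ μ` then `res_μ x (F β)`
  and `β` are two lifts of `F β` completing `μ` to the same morphism, hence they agree.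
* For `ind_μ`: let `ind_μ y` lie in `Z(β)`. By the right Ore condition choose `p ≫ F β = q ≫ F μ`
  and put `α = y q`, so that `y ∈ Z(α)`. Every `y' ∈ Z(α)` satisfies
  `ind_μ y' (q ≫ F μ) = α ≫ μ = ind_μ y (q ≫ F μ)`. Since `q ≫ F μ` factors through `F β`, the two
  paths `ind_μ y'` and `ind_μ y` also agree at `F β`, that is, `ind_μ y' ∈ Z(β)`. So `Z(α)` is a
  neighbourhood of `y` contained in the preimage of `Z(β)`.
-/

open CategoryTheory

universe v u v' u' v'' u''

namespace DCFpaper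

variable {E : Type u} [Category.{v} E] {B : Type u'} [Category.{v'} B]

/-- Equality of morphisms with possibly different (but equal) endpoints. -/
def MorEq {C : Type u''} [Category.{v''} C] {W X Y Z : C} (f : W ⟶ X) (g : Y ⟶ Z) : Prop :=
  ∃ (h₁ : W = Y) (h₂ : X = Z), f = eqToHom h₁ ≫ g ≫ eqToHom h₂.symm

/-- A lift of a factorization `F φ = l ≫ ρ` to a factorization of `φ`. -/
structure ConducheLift (F : E ⥤ B) {Y X : E} (φ : Y ⟶ X) {M : B}
    (l : F.obj Y ⟶ M) (ρ : M ⟶ F.obj X) where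
  mid : E
  lam : Y ⟶ mid
  rho : mid ⟶ X
  comp_eq : lam ≫ rho = φ
  obj_eq : F.obj mid = M
  map_lam : F.map lam = l ≫ eqToHom obj_eq.symm
  map_rho : F.map rho = eqToHom obj_eq ≫ ρ

/-- Discrete Conduché fibration: unique factorization lifting. -/
def IsDCF (F : E ⥤ B) : Prop :=
  ∀ {Y X : E} (φ : Y ⟶ X) {M : B} (l : F.obj Y ⟶ M) (ρ : M ⟶ F.obj X),
    F.map φ = l ≫ ρ →
      Nonempty (ConducheLift F φ l ρ) ∧ ∀ L L' : ConducheLift F φ l ρ, L = L'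

/-- Right Ore condition: every cospan can be completed to a commutative square. -/
def RightOre (C : Type u'') [Category.{v''} C] : Prop :=
  ∀ {A X D : C} (m : A ⟶ D) (n : X ⟶ D),
    ∃ (P : C) (p : P ⟶ A) (q : P ⟶ X), p ≫ m = q ≫ n

/-- Strongly right Ore. -/
def StronglyRightOre (C : Type u'') [Category.{v''} C] : Prop :=
  RightOre C ∧
    ∀ {A X D Z₁ Z₂ : C} (m : A ⟶ D) (n : X ⟶ D)
      (p₁ : Z₁ ⟶ A) (q₁ : Z₁ ⟶ X) (p₂ : Z₂ ⟶ A) (q₂ : Z₂ ⟶ X),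
      p₁ ≫ m = q₁ ≫ n → p₂ ≫ m = q₂ ≫ n →
        ∃ (W : C) (a : W ⟶ Z₁) (b : W ⟶ Z₂), a ≫ p₁ = b ≫ p₂ ∧ a ≫ q₁ = b ≫ q₂

/-- Locally split: each induced slice functor admits a section. -/
def LocallySplit (F : E ⥤ B) : Prop :=
  ∀ X : E, ∃ x : Over (F.obj X) ⥤ Over X, x ⋙ Over.post F = 𝟭 (Over (F.obj X))

/-- Kumjian-Pask fibration. -/
def IsKPF (F : E ⥤ B) : Prop :=
  IsDCF F ∧ LocallySplit F ∧ StronglyRightOre B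

/-- Row-finite functor. -/
def RowFinite (F : E ⥤ B) : Prop :=
  ∀ (X : E) {M : B} (b : M ⟶ F.obj X),
    {p : Σ Y : E, Y ⟶ X | ∃ h : F.obj p.1 = M, F.map p.2 = eqToHom h ≫ b}.Finite

/-- Strongly surjective functor. -/
def StronglySurjective (F : E ⥤ B) : Prop :=
  Function.Surjective F.obj ∧
    ∀ (X : E) {M : B} (b : M ⟶ F.obj X),
      ∃ (Y : E) (α : Y ⟶ X) (h : F.obj Y = M), F.map α = eqToHom h ≫ b

/-- An infinite path to `X`: a section of the induced slice functor. -/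
structure InfPath (F : E ⥤ B) (X : E) where
  fn : Over (F.obj X) ⥤ Over X
  sec : fn ⋙ Over.post F = 𝟭 (Over (F.obj X))

/-- The infinite path space `F^∞`. -/
def FInf (F : E ⥤ B) := Σ X : E, InfPath F X

/-- `x ∈ Z(μ)` for `x` an infinite path to the target of `μ`. -/
abbrev InPathOf {F : E ⥤ B} {Y X : E} (μ : Y ⟶ X) (x : InfPath F X) : Prop :=
  x.fn.obj (Over.mk (F.map μ)) = Over.mk μ

/-- `Z(X) ⊆ F^∞`. -/
def ZObj (F : E ⥤ B) (X : E) : Set (FInf F) := {p | p.1 = X}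

/-- `Z(μ) ⊆ F^∞`. -/
def ZMor (F : E ⥤ B) {Y X : E} (μ : Y ⟶ X) : Set (FInf F) :=
  {p | ∃ h : p.1 = X, InPathOf μ (h ▸ p.2)}

/-- The basic sets `Z(μ)`. -/
def pathBasis (F : E ⥤ B) : Set (Set (FInf F)) :=
  {S | ∃ (Y X : E) (μ : Y ⟶ X), S = ZMor F μ}

/-- The topology on `F^∞` generated by the sets `Z(μ)`. -/
def pathTopology (F : E ⥤ B) : TopologicalSpace (FInf F) :=
  TopologicalSpace.generateFrom (pathBasis F)

/-- The morphism `(u, g) : (g ≫ u) ⟶ u` of a slice category. -/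
def oHomW {T : Type u''} [Category.{v''} T] {X A A' : T} {u : A ⟶ X} {v : A' ⟶ X}
    (g : A' ⟶ A) (w : g ≫ u = v) : Over.mk v ⟶ Over.mk u :=
  Over.homMk g w

/-- The defining relation between `w = res_μ x` and `x = ind_μ w`, on objects:
`x(a ∘ F μ) = μ ∘ w(a)` for all `a`. -/
def IndRel (F : E ⥤ B) {Y X : E} (μ : Y ⟶ X) (w : InfPath F Y) (x : InfPath F X) : Prop :=
  ∀ {A : B} (a : A ⟶ F.obj Y),
    x.fn.obj (Over.mk (a ≫ F.map μ)) = Over.mk ((w.fn.obj (Over.mk a)).hom ≫ μ)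

/-- `w = res_μ x`. -/
def ResRel (F : E ⥤ B) {Y X : E} (μ : Y ⟶ X) (x : InfPath F X) (w : InfPath F Y) : Prop :=
  InPathOf μ x ∧ IndRel F μ w x

/-- `q = ind_μ p`, at the level of `F^∞`. -/
def IndRelP (F : E ⥤ B) {Y X : E} (μ : Y ⟶ X) (pw px : FInf F) : Prop :=
  ∃ (hw : pw.1 = Y) (hx : px.1 = X),
    InPathOf μ (hx ▸ px.2) ∧ IndRel F μ (hw ▸ pw.2) (hx ▸ px.2)

/-- `pw = res_μ px`, at the level of `F^∞`. -/
def ResRelP (F : E ⥤ B) {Y X : E} (μ : Y ⟶ X) (px pw : FInf F) : Prop :=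
  ∃ (hw : pw.1 = Y) (hx : px.1 = X), ResRel F μ (hx ▸ px.2) (hw ▸ pw.2)

/-- `z' = ind_μ (res_ν z)`. -/
def Translates (F : E ⥤ B) {W U V : E} (μ : W ⟶ U) (ν : W ⟶ V)
    (z : InfPath F V) (z' : InfPath F U) : Prop :=
  ∃ w : InfPath F W, ResRel F ν z w ∧ InPathOf μ z' ∧ IndRel F μ w z'

/-- `q = ind_μ (res_ν p)`, at the level of `F^∞`. -/
def TranslatesP (F : E ⥤ B) {W U V : E} (μ : W ⟶ U) (ν : W ⟶ V)
    (p q : FInf F) : Prop :=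
  ∃ (hp : p.1 = V) (hq : q.1 = U), Translates F μ ν (hp ▸ p.2) (hq ▸ q.2)

/-- An element `(μ, ν, x)` of `𝒢_F`. -/
structure PreG (F : E ⥤ B) where
  W : E
  U : E
  V : E
  μ : W ⟶ U
  ν : W ⟶ V
  x : InfPath F V
  mem : InPathOf ν x

/-- The relation `∼` on `𝒢_F`. -/
def GERel (F : E ⥤ B) (g g' : PreG F) : Prop :=
  (∃ hV : g.V = g'.V, hV ▸ g.x = g'.x) ∧
  (∃ (Λ : E) (lam : Λ ⟶ g.V),
     (⟨g.V, g.x⟩ : FInf F) ∈ ZMor F lam ∧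
     ZMor F lam ⊆ ZMor F g.ν ∩ ZMor F g'.ν ∧
     ∀ p ∈ ZMor F lam, ∀ q : FInf F,
       TranslatesP F g.μ g.ν p q ↔ TranslatesP F g'.μ g'.ν p q) ∧
  (∃ (M : B) (a : M ⟶ F.obj g.W) (b : M ⟶ F.obj g'.W),
     MorEq (a ≫ F.map g.μ) (b ≫ F.map g'.μ) ∧ MorEq (a ≫ F.map g.ν) (b ≫ F.map g'.ν))

/-- The groupoid `G_F` as a quotient set. -/
def GF (F : E ⥤ B) := Quot (GERel F)

/-- `k` is a composite of `g` and `h` in `G_F` (at the level of representatives). -/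
def CompRel (F : E ⥤ B) (g h k : PreG F) : Prop :=
  TranslatesP F h.μ h.ν ⟨h.V, h.x⟩ ⟨g.V, g.x⟩ ∧
  ∃ (P : E) (γ : P ⟶ g.W) (η : P ⟶ h.W) (hUV : h.U = g.V),
    γ ≫ g.ν = (η ≫ h.μ) ≫ eqToHom hUV ∧
    InPathOf (γ ≫ g.ν) g.x ∧
    ∃ mem : InPathOf (η ≫ h.ν) h.x,
      GERel F k ⟨P, g.U, h.V, γ ≫ g.μ, η ≫ h.ν, h.x, mem⟩

/-- The basic set `Z(μ,ν) ⊆ G_F`. -/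
def ZPair (F : E ⥤ B) {W U V : E} (μ : W ⟶ U) (ν : W ⟶ V) : Set (GF F) :=
  {g | ∃ (x : InfPath F V) (mem : InPathOf ν x),
        g = Quot.mk (GERel F) ⟨W, U, V, μ, ν, x, mem⟩}

/-- The basic sets `Z(μ,ν)`. -/
def pairBasis (F : E ⥤ B) : Set (Set (GF F)) :=
  {s | ∃ (W U V : E) (μ : W ⟶ U) (ν : W ⟶ V), s = ZPair F μ ν}

/-- The topology on `G_F`. -/
def gTopology (F : E ⥤ B) : TopologicalSpace (GF F) :=
  TopologicalSpace.generateFrom (pairBasis F)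

/-- A subcategory of a category: a class of objects and morphisms closed under
identities and composition. -/
structure Subcat (C : Type u'') [Category.{v''} C] where
  objs : Set C
  homs : ∀ ⦃M N : C⦄, (M ⟶ N) → Prop
  id_mem : ∀ {M : C}, M ∈ objs → homs (𝟙 M)
  comp_mem : ∀ {M N P : C} {f : M ⟶ N} {g : N ⟶ P}, homs f → homs g → homs (f ≫ g)
  src_mem : ∀ {M N : C} {f : M ⟶ N}, homs f → M ∈ objs
  tgt_mem : ∀ {M N : C} {f : M ⟶ N}, homs f → N ∈ objs

instance Subcat.cat {C : Type u''} [Category.{v''} C] (S : Subcat C) : Category S.objs where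
  Hom M N := {f : M.1 ⟶ N.1 // S.homs f}
  id M := ⟨𝟙 M.1, S.id_mem M.2⟩
  comp f g := ⟨f.1 ≫ g.1, S.comp_mem f.2 g.2⟩
  id_comp f := Subtype.ext (Category.id_comp f.1)
  comp_id f := Subtype.ext (Category.comp_id f.1)
  assoc f g h := Subtype.ext (Category.assoc f.1 g.1 h.1)

/-- The inclusion functor of a subcategory. -/
def Subcat.ι {C : Type u''} [Category.{v''} C] (S : Subcat C) : S.objs ⥤ C where
  obj M := M.1
  map f := f.1

/-- `f` is (up to the identifications of objects) the image of a morphism of `E`. -/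
def InImage (F : E ⥤ B) {M N : B} (f : M ⟶ N) : Prop :=
  ∃ (Y X : E) (μ : Y ⟶ X) (hY : F.obj Y = M) (hX : F.obj X = N),
    F.map μ = eqToHom hY ≫ f ≫ eqToHom hX.symm

/-- An aperiodic infinite path. -/
def AperiodicPath (F : E ⥤ B) {X : E} (x : InfPath F X) : Prop :=
  ∀ {Y Y' : E} (α : Y ⟶ X) (β : Y' ⟶ X) (w : FInf F),
    ResRelP F α ⟨X, x⟩ w → ResRelP F β ⟨X, x⟩ w → MorEq α β

/-- Spans in a category, as a type. -/
def SpanT (C : Type u'') [Category.{v''} C] := Σ (P Q R : C), (P ⟶ Q) × (P ⟶ R)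


/-- Pairs of composable elements of `G_F`. -/
def ComposablePairs (F : E ⥤ B) : Set (GF F × GF F) :=
  {p | ∃ g h : PreG F, p.1 = Quot.mk (GERel F) g ∧ p.2 = Quot.mk (GERel F) h ∧
        TranslatesP F h.μ h.ν ⟨h.V, h.x⟩ ⟨g.V, g.x⟩}

/-- The object part of the section identity `x ⋙ F = 𝟭`. -/
lemma InfPath.post_obj {F : E ⥤ B} {X : E} (x : InfPath F X) (c : Over (F.obj X)) :
    (Over.post F).obj (x.fn.obj c) = c :=
  Functor.congr_obj x.sec c

lemma InfPath.obj_left {F : E ⥤ B} {X : E} (x : InfPath F X) (c : Over (F.obj X)) :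
    F.obj (x.fn.obj c).left = c.left :=
  congrArg (fun o : Over (F.obj X) => o.left) (x.post_obj c)

lemma over_hom_of_eq {C : Type u''} [Category.{v''} C] {X : C} {a b : Over X} (h : a = b) :
    a.hom = eqToHom (congrArg (fun o : Over X => o.left) h) ≫ b.hom := by
  subst h; simp

lemma InfPath.map_hom {F : E ⥤ B} {X : E} (x : InfPath F X) (c : Over (F.obj X)) :
    F.map (x.fn.obj c).hom = eqToHom (x.obj_left c) ≫ c.hom :=
  over_hom_of_eq (x.post_obj c)

lemma InfPath.map_left {F : E ⥤ B} {X : E} (x : InfPath F X) {c d : Over (F.obj X)}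
    (f : c ⟶ d) : F.map (x.fn.map f).left =
      eqToHom (x.obj_left c) ≫ f.left ≫ eqToHom (x.obj_left d).symm := by
  have h := congrArg (fun g => g.left) (Functor.congr_hom x.sec f)
  simp only [Functor.comp_map, Over.post_map, Over.homMk_left, Functor.id_map, Over.comp_left,
    Over.eqToHom_left] at h
  exact h

/-- An infinite path `x` and a morphism `f : c ⟶ d` of the base slice give a lift of the
factorization `c = d ∘ f` to a factorization of `x c`. The value `x c` is replaced by an object `C`
equal to it, so that lifts obtained from two paths with the same value at `c` can be compared. -/
def InfPath.lift {F : E ⥤ B} {X : E} (x : InfPath F X) {c d : Over (F.obj X)}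
    (f : c ⟶ d) {C : Over X} (hC : x.fn.obj c = C) (e : F.obj C.left = c.left) :
    ConducheLift F C.hom (eqToHom e ≫ f.left) d.hom where
  mid := (x.fn.obj d).left
  lam := eqToHom (congrArg (fun o : Over X => o.left) hC.symm) ≫ (x.fn.map f).left
  rho := (x.fn.obj d).hom
  comp_eq := by subst hC; simp
  obj_eq := x.obj_left d
  map_lam := by subst hC; simp [x.map_left f]
  map_rho := x.map_hom d

/-- Infinite paths that agree at `c` agree at every `d` through which `c` factors. -/
lemma InfPath.obj_eq_of_hom {F : E ⥤ B} (hF : IsDCF F) {X : E} (x y : InfPath F X)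
    {c d : Over (F.obj X)} (f : c ⟶ d) (h : x.fn.obj c = y.fn.obj c) :
    x.fn.obj d = y.fn.obj d := by
  have e := y.obj_left c
  have hfac : F.map (y.fn.obj c).hom = (eqToHom e ≫ f.left) ≫ d.hom := by
    rw [y.map_hom c, Category.assoc, Over.w f]
  exact congrArg (fun L : ConducheLift F (y.fn.obj c).hom (eqToHom e ≫ f.left) d.hom =>
    Over.mk L.rho) ((hF _ _ _ hfac).2 (x.lift f h e) (y.lift f rfl e))

/-- A lift of `F β` is determined by its composite with `μ`. -/
lemma over_eq_of_comp_eq {F : E ⥤ B} (hF : IsDCF F) {V W Y X : E} (μ : Y ⟶ X)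
    (β : W ⟶ Y) (γ : V ⟶ Y) (hγ : Over.mk (F.map γ) = Over.mk (F.map β))
    (h : Over.mk (γ ≫ μ) = Over.mk (β ≫ μ)) : Over.mk γ = Over.mk β := by
  obtain rfl : V = W := congrArg (fun o : Over X => o.left) h
  have h1 : γ ≫ μ = β ≫ μ := by simpa using over_hom_of_eq h
  have h2 : F.map γ = F.map β := by simpa using over_hom_of_eq hγ
  let L : ConducheLift F (β ≫ μ) (F.map β) (F.map μ) :=
    ⟨Y, β, μ, rfl, rfl, by simp, by simp⟩
  let L' : ConducheLift F (β ≫ μ) (F.map β) (F.map μ) :=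
    ⟨Y, γ, μ, h1, rfl, by simp [h2], by simp⟩
  have hL : L' = L := (hF _ _ _ (F.map_comp β μ)).2 _ _
  have : γ = β := by injection hL
  rw [this]

lemma inPathOf_of_indRel {F : E ⥤ B} (hF : IsDCF F) {W Y X : E} {μ : Y ⟶ X} (β : W ⟶ Y)
    {w : InfPath F Y} {x : InfPath F X} (h : IndRel F μ w x) :
    InPathOf β w ↔ InPathOf (β ≫ μ) x := by
  have h0 := h (F.map β)
  rw [← F.map_comp] at h0
  constructor
  · intro hw
    have hw' : w.fn.obj (Over.mk (F.map β)) = Over.mk β := hw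
    change x.fn.obj _ = _
    rw [h0, hw']; rfl
  · intro hx
    exact over_eq_of_comp_eq hF μ β (w.fn.obj _).hom (w.post_obj _) (h0.symm.trans hx)

/-- If `ind_μ w` passes through `β`, then `w` passes through some `α` such that `ind_μ w'` passes
through `β` whenever `w'` passes through `α`. -/
lemma exists_inPathOf_forall_indRel {F : E ⥤ B} (hF : IsDCF F) (hB : RightOre B) {W Y X : E}
    {μ : Y ⟶ X} {β : W ⟶ X} {w : InfPath F Y} {x : InfPath F X} (h : IndRel F μ w x)
    (hx : InPathOf β x) :
    ∃ (V : E) (α : V ⟶ Y), InPathOf α w ∧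
      ∀ (w' : InfPath F Y) (x' : InfPath F X), IndRel F μ w' x' → InPathOf α w' →
        InPathOf β x' := by
  obtain ⟨P, p, q, hpq⟩ := hB (F.map β) (F.map μ)
  have hα : Over.mk (F.map (w.fn.obj (Over.mk q)).hom) = Over.mk q := w.post_obj (Over.mk q)
  refine ⟨_, (w.fn.obj (Over.mk q)).hom, ?_, fun w' x' h' hw' => ?_⟩
  · exact congrArg w.fn.obj hα
  · have hq : w'.fn.obj (Over.mk q) = w.fn.obj (Over.mk q) :=
      (congrArg w'.fn.obj hα).symm.trans hw'
    have hc : x'.fn.obj (Over.mk (q ≫ F.map μ)) = x.fn.obj (Over.mk (q ≫ F.map μ)) := by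
      rw [h' q, h q, hq]
    exact (x'.obj_eq_of_hom hF x (oHomW p hpq) hc).trans hx

theorem statement_14 (F : E ⥤ B) (hF : IsKPF F) {Y X : E} (μ : Y ⟶ X)
    (res : (ZMor F μ).Elem → (ZObj F Y).Elem)
    (ind : (ZObj F Y).Elem → (ZMor F μ).Elem)
    (hres : ∀ x, ResRelP F μ x.1 (res x).1)
    (hind : ∀ y, IndRelP F μ y.1 (ind y).1) :
    letI : TopologicalSpace (FInf F) := pathTopology F
    Continuous res ∧ Continuous ind := by
  let _ : TopologicalSpace (FInf F) := pathTopology F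
  obtain ⟨hD, -, hO, -⟩ := hF
  have isOpen_ZMor : ∀ {W V : E} (β : W ⟶ V), IsOpen (ZMor F β) := fun β =>
    TopologicalSpace.isOpen_generateFrom_of_mem ⟨_, _, β, rfl⟩
  constructor
  · refine continuous_induced_rng.2 (continuous_generateFrom_iff.2 ?_)
    rintro _ ⟨W, Y', β, rfl⟩
    by_cases hY : Y' = Y
    · subst hY
      convert (isOpen_ZMor (β ≫ μ)).preimage continuous_subtype_val using 1
      ext x
      have key := hres x
      simp only [Set.mem_preimage, Function.comp_apply]
      generalize (res x).1 = pw at key ⊢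
      obtain ⟨⟨X', x⟩, hxμ⟩ := x
      obtain ⟨Y'', w⟩ := pw
      obtain ⟨hw, hx, -, hr⟩ := key
      dsimp only at hw hx
      subst hw hx
      have := inPathOf_of_indRel hD β hr
      exact ⟨fun ⟨_, h⟩ => ⟨rfl, this.1 h⟩, fun ⟨_, h⟩ => ⟨rfl, this.2 h⟩⟩
    · -- `Z(β)` consists of paths to `Y' ≠ Y`, so it misses the range of `res`.
      convert isOpen_empty using 1
      refine Set.eq_empty_of_forall_notMem fun x hx => hY ?_
      obtain ⟨h, -⟩ := hx
      exact h.symm.trans (res x).2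
  · refine continuous_induced_rng.2 (continuous_generateFrom_iff.2 ?_)
    rintro _ ⟨W, X', β, rfl⟩
    refine isOpen_iff_forall_mem_open.2 fun y hy => ?_
    have hX : X' = X := hy.1.symm.trans (ind y).2.1
    subst hX
    have key : ∃ (V : E) (α : V ⟶ Y), y.1 ∈ ZMor F α ∧
        ∀ pw px, IndRelP F μ pw px → pw ∈ ZMor F α → px ∈ ZMor F β := by
      have hy' : (ind y).1 ∈ ZMor F β := hy
      have hr := hind y
      generalize (ind y).1 = px at hy' hr
      obtain ⟨⟨Y', w⟩, hyY⟩ := y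
      obtain ⟨X'', x⟩ := px
      obtain ⟨hw, hx, -, hr⟩ := hr
      dsimp only at hw hx
      subst hw hx
      obtain ⟨V, α, hα, hall⟩ := exists_inPathOf_forall_indRel hD hO hr hy'.2
      refine ⟨V, α, ⟨rfl, hα⟩, ?_⟩
      rintro ⟨Y₁, w'⟩ ⟨X₁, x'⟩ ⟨h₁, h₂, h₄, hr'⟩ ⟨h₃, hw'⟩
      exact ⟨h₂, hall _ _ hr' hw'⟩
    obtain ⟨V, α, hα, hall⟩ := key
    exact ⟨Subtype.val ⁻¹' ZMor F α, fun y' hy' => hall _ _ (hind y') hy',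
      (isOpen_ZMor α).preimage continuous_subtype_val, hα⟩

end DCFpaper
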